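/- Let F₁, F₂, F₃ be three distinct facets of K₁ all containing a common vertex v of K₁ (so that F₁ ∩ F₂ ∩ F₃ = {v}), and let c₁, c₂, c₃ be their centres. If c₁, c₂, c₃ ∈ λK₁ + u for some λ > 0 and u ∈ ℝ³, then λ ≥ 2/3. -/

import Mathlib

open Pointwise

/-- The unit cross-polytope in ℝ³. -/
def K1 : Set (Fin 3 → ℝ) := {x | |x 0| + |x 1| + |x 2| ≤ 1}

/-- The six vertices of the unit cross-polytope. -/
def K1Vertices : Set (Fin 3 → ℝ) :=
  {![1, 0, 0], ![-1, 0, 0], ![0, 1, 0], ![0, -1, 0], ![0, 0, 1], ![0, 0, -1]}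

/-- The facet of `K1` determined by a sign vector `e` (each `e i` being `1` or `-1`). -/
def K1Facet (e : Fin 3 → ℝ) : Set (Fin 3 → ℝ) :=
  convexHull ℝ {![e 0, 0, 0], ![0, e 1, 0], ![0, 0, e 2]}

/-- The centre (centroid) of the facet determined by the sign vector `e`. -/
noncomputable def K1FacetCentre (e : Fin 3 → ℝ) : Fin 3 → ℝ :=
  (1 / 3 : ℝ) • (![e 0, 0, 0] + ![0, e 1, 0] + ![0, 0, e 2])

/-!
Any two of the points `u + λ x` with `‖x‖₁ ≤ 1` are at `ℓ¹`-distance at most `2 |λ|`, while the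
centres of the facets with sign vectors `e` and `f` in dimension `n` are at `ℓ¹`-distance `2 d / n`,
where `d` is the number of coordinates in which `e` and `f` differ. Changing one sign changes the
product of all signs. Among three distinct sign vectors two have the same product, so these two
differ in at least two coordinates.
-/

section SignVectors

variable {ι R : Type*} [Fintype ι] [CommRing R] {e f g : ι → R}

lemma prod_eq_neg_one_pow_hammingDist_mul_prod [DecidableEq R]
    (he : ∀ i, e i = 1 ∨ e i = -1) (hf : ∀ i, f i = 1 ∨ f i = -1) :
    ∏ i, e i = (-1) ^ hammingDist e f * ∏ i, f i := by
  have hflip (i : ι) : e i = (if e i ≠ f i then -1 else 1) * f i := by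
    by_cases hef : e i = f i
    · simp [hef]
    · rw [if_pos hef, neg_one_mul]
      rcases he i with h | h <;> rcases hf i with h' | h' <;> simp [h, h'] at hef ⊢
  calc ∏ i, e i = ∏ i, (if e i ≠ f i then -1 else 1) * f i :=
        Finset.prod_congr rfl fun i _ => hflip i
    _ = (-1) ^ hammingDist e f * ∏ i, f i := by
        rw [Finset.prod_mul_distrib, ← Finset.prod_filter, Finset.prod_const, hammingDist]

lemma prod_eq_one_or_neg_one (he : ∀ i, e i = 1 ∨ e i = -1) :
    ∏ i, e i = 1 ∨ ∏ i, e i = -1 := by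
  refine Finset.prod_induction e (fun x => x = 1 ∨ x = -1) ?_ (Or.inl rfl) fun i _ => he i
  rintro _ _ (rfl | rfl) (rfl | rfl) <;> simp

variable [LinearOrder R] [IsStrictOrderedRing R]

lemma sum_abs_sub_eq_two_mul_hammingDist
    (he : ∀ i, e i = 1 ∨ e i = -1) (hf : ∀ i, f i = 1 ∨ f i = -1) :
    ∑ i, |e i - f i| = 2 * hammingDist e f := by
  have habs (i : ι) : |e i - f i| = if e i ≠ f i then 2 else 0 := by
    rcases he i with h | h <;> rcases hf i with h' | h' <;> rw [h, h'] <;> norm_num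
  simp only [habs, ← Finset.sum_filter, Finset.sum_const, hammingDist, nsmul_eq_mul, mul_comm]

lemma two_le_hammingDist_of_prod_eq
    (he : ∀ i, e i = 1 ∨ e i = -1) (hf : ∀ i, f i = 1 ∨ f i = -1) (hne : e ≠ f)
    (hprod : ∏ i, e i = ∏ i, f i) : 2 ≤ hammingDist e f := by
  have hpos : 0 < hammingDist e f := hammingDist_pos.2 hne
  have hne_one : hammingDist e f ≠ 1 := fun h => by
    have hneg := prod_eq_neg_one_pow_hammingDist_mul_prod he hf
    rw [h, hprod, pow_one, neg_one_mul, self_eq_neg] at hneg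
    rcases prod_eq_one_or_neg_one hf with h' | h' <;> simp [h'] at hneg
  lia

lemma two_le_hammingDist_or_or_of_ne
    (he : ∀ i, e i = 1 ∨ e i = -1) (hf : ∀ i, f i = 1 ∨ f i = -1) (hg : ∀ i, g i = 1 ∨ g i = -1)
    (hef : e ≠ f) (heg : e ≠ g) (hfg : f ≠ g) :
    2 ≤ hammingDist e f ∨ 2 ≤ hammingDist e g ∨ 2 ≤ hammingDist f g := by
  have hpigeonhole : ∏ i, e i = ∏ i, f i ∨ ∏ i, e i = ∏ i, g i ∨ ∏ i, f i = ∏ i, g i := by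
    rcases prod_eq_one_or_neg_one he with h | h <;>
      rcases prod_eq_one_or_neg_one hf with h' | h' <;>
      rcases prod_eq_one_or_neg_one hg with h'' | h'' <;>
      simp [h, h', h'']
  exact hpigeonhole.imp (two_le_hammingDist_of_prod_eq he hf hef)
    (Or.imp (two_le_hammingDist_of_prod_eq he hg heg) (two_le_hammingDist_of_prod_eq hf hg hfg))

end SignVectors

section CrossPolytope

variable {ι : Type*} [Fintype ι]

/-- The unit cross-polytope in `ℝ^ι`, as a subset of the function space `ι → ℝ` (whose Mathlib norm
is the supremum norm, not the `ℓ¹`-norm used here). -/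
def crossPolytope (ι : Type*) [Fintype ι] : Set (ι → ℝ) := {x | ∑ i, |x i| ≤ 1}

/-- The centroid of the facet of `crossPolytope ι` with sign vector `e`, that is, of the facet with
vertices `Pi.single i (e i)`. -/
noncomputable def facetCentre [DecidableEq ι] (e : ι → ℝ) : ι → ℝ :=
  (Fintype.card ι : ℝ)⁻¹ • ∑ i, Pi.single i (e i)

lemma facetCentre_apply [DecidableEq ι] (e : ι → ℝ) (i : ι) :
    facetCentre e i = (Fintype.card ι : ℝ)⁻¹ * e i := by
  rw [facetCentre, Finset.univ_sum_single, Pi.smul_apply, smul_eq_mul]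

lemma sum_abs_sub_le_of_mem_vadd_smul_crossPolytope {x u : ι → ℝ} {r : ℝ}
    (hx : x ∈ u +ᵥ r • crossPolytope ι) : ∑ i, |x i - u i| ≤ |r| := by
  obtain ⟨_, ⟨y, hy, rfl⟩, rfl⟩ := hx
  calc ∑ i, |(u +ᵥ r • y) i - u i| = |r| * ∑ i, |y i| := by
        simp [abs_mul, Finset.mul_sum]
    _ ≤ |r| := mul_le_of_le_one_right (abs_nonneg r) hy

lemma sum_abs_sub_le_two_mul_of_mem_vadd_smul_crossPolytope {x y u : ι → ℝ} {r : ℝ}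
    (hx : x ∈ u +ᵥ r • crossPolytope ι) (hy : y ∈ u +ᵥ r • crossPolytope ι) :
    ∑ i, |x i - y i| ≤ 2 * |r| :=
  calc ∑ i, |x i - y i| ≤ ∑ i, (|x i - u i| + |u i - y i|) :=
        Finset.sum_le_sum fun i _ => abs_sub_le (x i) (u i) (y i)
    _ = ∑ i, |x i - u i| + ∑ i, |y i - u i| := by
        simp only [Finset.sum_add_distrib, abs_sub_comm (u _)]
    _ ≤ 2 * |r| := by
        linarith [sum_abs_sub_le_of_mem_vadd_smul_crossPolytope hx,
          sum_abs_sub_le_of_mem_vadd_smul_crossPolytope hy]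

variable [DecidableEq ι]

lemma sum_abs_facetCentre_sub_facetCentre {e f : ι → ℝ}
    (he : ∀ i, e i = 1 ∨ e i = -1) (hf : ∀ i, f i = 1 ∨ f i = -1) :
    ∑ i, |facetCentre e i - facetCentre f i| = 2 * (hammingDist e f / Fintype.card ι) := by
  simp only [facetCentre_apply, ← mul_sub, abs_mul, ← Finset.mul_sum, abs_inv, Nat.abs_cast,
    sum_abs_sub_eq_two_mul_hammingDist he hf]
  ring

lemma div_card_le_abs_of_facetCentre_mem {e f u : ι → ℝ} {r : ℝ} {d : ℕ}
    (he : ∀ i, e i = 1 ∨ e i = -1) (hf : ∀ i, f i = 1 ∨ f i = -1)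
    (hce : facetCentre e ∈ u +ᵥ r • crossPolytope ι)
    (hcf : facetCentre f ∈ u +ᵥ r • crossPolytope ι) (hd : d ≤ hammingDist e f) :
    (d : ℝ) / Fintype.card ι ≤ |r| := by
  have hdist := sum_abs_sub_le_two_mul_of_mem_vadd_smul_crossPolytope hce hcf
  rw [sum_abs_facetCentre_sub_facetCentre he hf] at hdist
  calc (d : ℝ) / Fintype.card ι ≤ hammingDist e f / Fintype.card ι := by gcongr
    _ ≤ |r| := by linarith

theorem ratio_ge_two_thirds_of_three_adjacent_centres_general {e₁ e₂ e₃ u : ι → ℝ} {r : ℝ}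
    (he₁ : ∀ i, e₁ i = 1 ∨ e₁ i = -1) (he₂ : ∀ i, e₂ i = 1 ∨ e₂ i = -1)
    (he₃ : ∀ i, e₃ i = 1 ∨ e₃ i = -1) (hne₁₂ : e₁ ≠ e₂) (hne₁₃ : e₁ ≠ e₃) (hne₂₃ : e₂ ≠ e₃)
    (hc₁ : facetCentre e₁ ∈ u +ᵥ r • crossPolytope ι)
    (hc₂ : facetCentre e₂ ∈ u +ᵥ r • crossPolytope ι)
    (hc₃ : facetCentre e₃ ∈ u +ᵥ r • crossPolytope ι) :
    2 / (Fintype.card ι : ℝ) ≤ |r| := by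
  rcases two_le_hammingDist_or_or_of_ne he₁ he₂ he₃ hne₁₂ hne₁₃ hne₂₃ with
    h₁₂ | h₁₃ | h₂₃
  · exact div_card_le_abs_of_facetCentre_mem he₁ he₂ hc₁ hc₂ h₁₂
  · exact div_card_le_abs_of_facetCentre_mem he₁ he₃ hc₁ hc₃ h₁₃
  · exact div_card_le_abs_of_facetCentre_mem he₂ he₃ hc₂ hc₃ h₂₃

end CrossPolytope

lemma K1_eq_crossPolytope : K1 = crossPolytope (Fin 3) := by
  simp only [K1, crossPolytope, Fin.sum_univ_three]

lemma K1FacetCentre_eq_facetCentre (e : Fin 3 → ℝ) : K1FacetCentre e = facetCentre e := by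
  ext i
  fin_cases i <;> simp [K1FacetCentre, facetCentre_apply]

/-- If `λ • K1 + u` contains the centres of three distinct facets of `K1` all containing a
common vertex `v` of `K1`, then `λ ≥ 2/3`. -/
theorem ratio_ge_two_thirds_of_three_adjacent_centres
    (e₁ e₂ e₃ : Fin 3 → ℝ)
    (he₁ : ∀ i, e₁ i = 1 ∨ e₁ i = -1) (he₂ : ∀ i, e₂ i = 1 ∨ e₂ i = -1)
    (he₃ : ∀ i, e₃ i = 1 ∨ e₃ i = -1)
    (hne₁₂ : K1Facet e₁ ≠ K1Facet e₂) (hne₁₃ : K1Facet e₁ ≠ K1Facet e₃)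
    (hne₂₃ : K1Facet e₂ ≠ K1Facet e₃)
    (v : Fin 3 → ℝ) (hv : v ∈ K1Vertices)
    (hv₁ : v ∈ K1Facet e₁) (hv₂ : v ∈ K1Facet e₂) (hv₃ : v ∈ K1Facet e₃)
    (lam : ℝ) (hlam : 0 < lam) (u : Fin 3 → ℝ)
    (hc₁ : K1FacetCentre e₁ ∈ u +ᵥ lam • K1)
    (hc₂ : K1FacetCentre e₂ ∈ u +ᵥ lam • K1)
    (hc₃ : K1FacetCentre e₃ ∈ u +ᵥ lam • K1) :
    2 / 3 ≤ lam := by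
  rw [K1_eq_crossPolytope, K1FacetCentre_eq_facetCentre] at hc₁ hc₂ hc₃
  simpa [abs_of_pos hlam] using ratio_ge_two_thirds_of_three_adjacent_centres_general he₁ he₂ he₃
    (ne_of_apply_ne _ hne₁₂) (ne_of_apply_ne _ hne₁₃) (ne_of_apply_ne _ hne₂₃) hc₁ hc₂ hc₃
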